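/- Let B_1, B_2, …, B_{n−1} be n×n oscillatory matrices. Then the product B_1 B_2 ⋯ B_{n−1} is totally positive. -/

import Mathlib

/-- A square real matrix is totally nonnegative if all its minors are nonnegative. -/
def TotallyNonneg {n : ℕ} (A : Matrix (Fin n) (Fin n) ℝ) : Prop :=
  ∀ (k : ℕ) (r c : Fin k → Fin n), StrictMono r → StrictMono c →
    0 ≤ (A.submatrix r c).det

/-- A square real matrix is totally positive if all its minors are positive. -/
def TotallyPos {n : ℕ} (A : Matrix (Fin n) (Fin n) ℝ) : Prop :=
  ∀ (k : ℕ) (r c : Fin k → Fin n), StrictMono r → StrictMono c →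
    0 < (A.submatrix r c).det

/-- A is oscillatory if it is totally nonnegative and some positive power is totally positive. -/
def Oscillatory {n : ℕ} (A : Matrix (Fin n) (Fin n) ℝ) : Prop :=
  TotallyNonneg A ∧ ∃ k : ℕ, 0 < k ∧ TotallyPos (A ^ k)
/-- Schur complement with respect to the top left entry. -/
noncomputable def schur {n : ℕ} (B : Matrix (Fin (n + 1)) (Fin (n + 1)) ℝ) :
    Matrix (Fin n) (Fin n) ℝ :=
  fun i j => B i.succ j.succ - B i.succ 0 * B 0 j.succ / B 0 0

theorem det_schur {n : ℕ} (B : Matrix (Fin (n + 1)) (Fin (n + 1)) ℝ) (h : B 0 0 ≠ 0) :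
    B.det = B 0 0 * (schur B).det := by
  let A : Matrix (Fin (n + 1)) (Fin (n + 1)) ℝ :=
    fun i j => B i j + (if i = 0 then 0 else - (B i 0 / B 0 0)) * B 0 j
  have hA : A.det = B.det :=
    Matrix.det_eq_of_forall_row_eq_smul_add_const
      (fun i => if i = 0 then 0 else - (B i 0 / B 0 0)) 0 (by simp) (fun i j => rfl)
  rw [← hA, Matrix.det_succ_column_zero, Fin.sum_univ_succ, Finset.sum_eq_zero]
  · have h1 : A 0 0 = B 0 0 := by simp [A]
    have h2 : A.submatrix (Fin.succAbove 0) Fin.succ = schur B := by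
      ext i j
      rw [Matrix.submatrix_apply]
      simp only [Fin.succAbove_zero, A, schur, Fin.succ_ne_zero, if_false]
      ring
    rw [h1, h2]
    simp
  · intro i _
    have : A i.succ 0 = 0 := by
      simp [A]
      field_simp
      ring
    rw [this]; simp

theorem det_schur_minor {n k : ℕ} (B : Matrix (Fin (n + 1)) (Fin (n + 1)) ℝ) (h : B 0 0 ≠ 0)
    (r c : Fin (k + 1) → Fin (n + 1)) (r' c' : Fin k → Fin n) (hr0 : r 0 = 0) (hc0 : c 0 = 0)
    (hr : ∀ i, r i.succ = (r' i).succ) (hc : ∀ i, c i.succ = (c' i).succ) :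
    (B.submatrix r c).det = B 0 0 * ((schur B).submatrix r' c').det := by
  have h0 : (B.submatrix r c) 0 0 = B 0 0 := by simp [hr0, hc0]
  rw [det_schur _ (by rw [h0]; exact h), h0]
  congr 2
  ext i j
  simp [schur, hr0, hc0, hr, hc]

theorem TotallyNonneg.entry {n : ℕ} {B : Matrix (Fin n) (Fin n) ℝ} (h : TotallyNonneg B)
    (i j : Fin n) : 0 ≤ B i j := by
  have := h 1 (fun _ => i) (fun _ => j) (Subsingleton.strictMono _) (Subsingleton.strictMono _)
  simpa using this

theorem TotallyNonneg.two {n : ℕ} {B : Matrix (Fin n) (Fin n) ℝ} (h : TotallyNonneg B)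
    {i i' j j' : Fin n} (hi : i < i') (hj : j < j') : B i j' * B i' j ≤ B i j * B i' j' := by
  have := h 2 ![i, i'] ![j, j'] (by simpa [Fin.strictMono_iff_lt_succ] using hi)
    (by simpa [Fin.strictMono_iff_lt_succ] using hj)
  rw [Matrix.det_fin_two] at this
  simp at this
  linarith

theorem TotallyNonneg.sub {n m : ℕ} {B : Matrix (Fin n) (Fin n) ℝ} (h : TotallyNonneg B)
    (f g : Fin m → Fin n) (hf : StrictMono f) (hg : StrictMono g) :
    TotallyNonneg (B.submatrix f g) := fun k r c hr hc => by
  simpa using h k (f ∘ r) (g ∘ c) (hf.comp hr) (hg.comp hc)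

theorem TotallyNonneg.transp {n : ℕ} {B : Matrix (Fin n) (Fin n) ℝ} (h : TotallyNonneg B) :
    TotallyNonneg B.transpose := fun k r c hr hc => by
  rw [← Matrix.transpose_submatrix, Matrix.det_transpose]
  exact h k c r hc hr

theorem det_rev {k : ℕ} (A : Matrix (Fin k) (Fin k) ℝ) :
    (A.submatrix Fin.rev Fin.rev).det = A.det :=
  Matrix.det_submatrix_equiv_self Fin.revPerm A

theorem TotallyNonneg.refl {n : ℕ} {B : Matrix (Fin n) (Fin n) ℝ} (h : TotallyNonneg B) :
    TotallyNonneg (B.submatrix Fin.rev Fin.rev) := fun k r c hr hc => by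
  rw [← det_rev]
  have := h k (Fin.rev ∘ r ∘ Fin.rev) (Fin.rev ∘ c ∘ Fin.rev)
    (fun i j hij => by simpa using hr (by simpa using hij))
    (fun i j hij => by simpa using hc (by simpa using hij))
  simpa [Function.comp_assoc] using this

theorem TotallyNonneg.corner {n : ℕ} {B : Matrix (Fin (n + 1)) (Fin (n + 1)) ℝ}
    (h : TotallyNonneg B) (hd : B.det ≠ 0) : 0 < B 0 0 := by
  by_contra h0
  have h00 : B 0 0 = 0 := le_antisymm (not_lt.1 h0) (h.entry 0 0)
  have : ∃ j, B 0 j ≠ 0 := by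
    by_contra hj
    push Not at hj
    exact hd (Matrix.det_eq_zero_of_row_eq_zero 0 hj)
  obtain ⟨j, hj⟩ := this
  have hj0 : 0 < j := by
    rw [Fin.pos_iff_ne_zero]; rintro rfl; exact hj h00
  have hjp : 0 < B 0 j := lt_of_le_of_ne (h.entry 0 j) (Ne.symm hj)
  apply hd
  refine Matrix.det_eq_zero_of_column_eq_zero 0 (fun p => ?_)
  rcases eq_or_ne p 0 with rfl | hp
  · exact h00
  have := h.two (Fin.pos_iff_ne_zero.2 hp) hj0
  rw [h00] at this
  have h2 := h.entry p 0
  nlinarith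

theorem strictMono_consZero {k n : ℕ} {r : Fin k → Fin n} (hr : StrictMono r) :
    StrictMono (Fin.cons 0 (fun i => (r i).succ) : Fin (k + 1) → Fin (n + 1)) := by
  intro i j
  refine Fin.cases ?_ (fun i => ?_) i <;> refine Fin.cases ?_ (fun j => ?_) j
  · simp
  · simp
  · simp
  · intro h
    simpa using hr (by simpa using h)

theorem TotallyNonneg.schur {n : ℕ} {B : Matrix (Fin (n + 1)) (Fin (n + 1)) ℝ}
    (h : TotallyNonneg B) (hd : B.det ≠ 0) :
    TotallyNonneg (schur B) ∧ (_root_.schur B).det ≠ 0 := by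
  have hc := h.corner hd
  constructor
  · intro k r c hr hcm
    have := h (k + 1) _ _ (strictMono_consZero hr) (strictMono_consZero hcm)
    rw [det_schur_minor B hc.ne' _ _ r c (by simp) (by simp) (by simp) (by simp)] at this
    exact nonneg_of_mul_nonneg_right this hc
  · intro h0
    rw [det_schur B hc.ne', h0, mul_zero] at hd
    exact hd rfl

theorem TotallyNonneg.dropLast {n : ℕ} {B : Matrix (Fin (n + 1)) (Fin (n + 1)) ℝ}
    (h : TotallyNonneg B) (hd : B.det ≠ 0) :
    (B.submatrix Fin.castSucc Fin.castSucc).det ≠ 0 := by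
  induction n with
  | zero => simp
  | succ n ih =>
    have hc := h.corner hd
    rw [det_schur_minor B hc.ne' _ _ Fin.castSucc Fin.castSucc (by simp) (by simp)
      (by simp) (by simp)]
    exact mul_ne_zero hc.ne' (ih (h.schur hd).1 (h.schur hd).2)

theorem TotallyNonneg.dropFirst {n : ℕ} {B : Matrix (Fin (n + 1)) (Fin (n + 1)) ℝ}
    (h : TotallyNonneg B) (hd : B.det ≠ 0) :
    (B.submatrix Fin.succ Fin.succ).det ≠ 0 := by
  have := h.refl.dropLast (by rwa [det_rev])
  rw [← det_rev] at this
  convert this using 2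
  ext i j
  simp [Fin.rev_castSucc]

theorem TotallyNonneg.diag {n : ℕ} {B : Matrix (Fin n) (Fin n) ℝ}
    (h : TotallyNonneg B) (hd : B.det ≠ 0) (i : Fin n) : 0 < B i i := by
  induction n with
  | zero => exact i.elim0
  | succ n ih =>
    refine Fin.cases (h.corner hd) (fun i => ?_) i
    exact ih (h.sub Fin.succ Fin.succ (Fin.strictMono_succ) (Fin.strictMono_succ))
      (h.dropFirst hd) i

/-- Positive first super- and subdiagonals. -/
def Sup {n : ℕ} (B : Matrix (Fin n) (Fin n) ℝ) : Prop :=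
  ∀ i j : Fin n, i.val + 1 = j.val → 0 < B i j ∧ 0 < B j i

theorem Sup.schur {n : ℕ} {B : Matrix (Fin (n + 1)) (Fin (n + 1)) ℝ}
    (h : TotallyNonneg B) (hd : B.det ≠ 0) (hs : Sup (B.submatrix Fin.succ Fin.succ)) :
    Sup (schur B) := by
  have hc := h.corner hd
  obtain ⟨hS, hSd⟩ := h.schur hd
  have key : ∀ (C : Matrix (Fin (n + 1)) (Fin (n + 1)) ℝ), TotallyNonneg C → C.det ≠ 0 →
      ∀ i j : Fin n, i.val + 1 = j.val → 0 < C i.succ j.succ → 0 < _root_.schur C i j := by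
    intro C h hd i j hij hp
    have hc := h.corner hd
    obtain ⟨hS, hSd⟩ := h.schur hd
    by_contra hn
    have h0 : _root_.schur C i j = 0 := le_antisymm (not_lt.1 hn) (hS.entry i j)
    have hii := hS.diag hSd i
    have h2 := h.two (i := 0) (i' := i.succ) (j := i.succ) (j' := j.succ) (Fin.succ_pos i)
      (by rw [Fin.lt_def]; simp; omega)
    have e1 : C 0 i.succ * _root_.schur C i j - C 0 j.succ * _root_.schur C i i =
        C 0 i.succ * C i.succ j.succ - C 0 j.succ * C i.succ i.succ := by
      simp only [_root_.schur]; field_simp; ring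
    rw [h0] at e1
    have h3 := h.entry 0 j.succ
    have h4 : C 0 j.succ = 0 := by nlinarith
    simp [_root_.schur, h4] at h0
    exact hp.ne' h0
  intro i j hij
  obtain ⟨h1, h2⟩ := hs i j hij
  refine ⟨key B h hd i j hij h1, ?_⟩
  have := key B.transpose h.transp (by rwa [Matrix.det_transpose]) i j hij h2
  simp only [_root_.schur, Matrix.transpose_apply] at this ⊢
  rwa [mul_comm (B j.succ 0)]

/-- The class of matrices used in the induction. -/
structure Cls {n : ℕ} (B : Matrix (Fin n) (Fin n) ℝ) : Prop where
  tn : TotallyNonneg B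
  det : B.det ≠ 0
  sup : Sup B

theorem Cls.schur' {n : ℕ} {B : Matrix (Fin (n + 1)) (Fin (n + 1)) ℝ}
    (h : TotallyNonneg B) (hd : B.det ≠ 0) (hs : Sup (B.submatrix Fin.succ Fin.succ)) :
    Cls (schur B) := ⟨(h.schur hd).1, (h.schur hd).2, Sup.schur h hd hs⟩

theorem Cls.supTail {n : ℕ} {B : Matrix (Fin (n + 1)) (Fin (n + 1)) ℝ} (h : Cls B) :
    Sup (B.submatrix Fin.succ Fin.succ) := fun i j hij => h.sup i.succ j.succ (by simp; omega)

theorem Cls.tail {n : ℕ} {B : Matrix (Fin (n + 1)) (Fin (n + 1)) ℝ} (h : Cls B) :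
    Cls (B.submatrix Fin.succ Fin.succ) :=
  ⟨h.tn.sub _ _ Fin.strictMono_succ Fin.strictMono_succ, h.tn.dropFirst h.det, h.supTail⟩

theorem Cls.transp {n : ℕ} {B : Matrix (Fin n) (Fin n) ℝ} (h : Cls B) : Cls B.transpose :=
  ⟨h.tn.transp, by rw [Matrix.det_transpose]; exact h.det,
    fun i j hij => ⟨(h.sup i j hij).2, (h.sup i j hij).1⟩⟩

theorem Cls.refl {n : ℕ} {B : Matrix (Fin n) (Fin n) ℝ} (h : Cls B) :
    Cls (B.submatrix Fin.rev Fin.rev) :=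
  ⟨h.tn.refl, by rw [det_rev]; exact h.det, fun i j hij => by
    have := h.sup j.rev i.rev (by simp [Fin.val_rev]; omega)
    exact ⟨this.2, this.1⟩⟩

theorem Cls.quasiLast {n : ℕ} {B : Matrix (Fin (n + 2)) (Fin (n + 2)) ℝ} (h : Cls B) :
    (B.submatrix (Fin.succAbove (Fin.last n).castSucc) Fin.castSucc).det ≠ 0 := by
  induction n with
  | zero =>
    have := (h.sup 0 1 rfl).2
    simp
    exact this.ne'
  | succ n ih =>
    have hc := h.tn.corner h.det
    rw [det_schur_minor B hc.ne' _ _ (Fin.succAbove (Fin.last n).castSucc) Fin.castSucc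
      ?_ ?_ ?_ ?_]
    · exact mul_ne_zero hc.ne' (ih (Cls.schur' h.tn h.det h.supTail))
    · rfl
    · rfl
    · intro i
      rw [← Fin.succ_succAbove_succ]
      rfl
    · intro i; rfl

theorem Cls.quasiFirst {n : ℕ} {B : Matrix (Fin (n + 2)) (Fin (n + 2)) ℝ} (h : Cls B) :
    (B.submatrix (Fin.succAbove 1) Fin.succ).det ≠ 0 := by
  have := h.refl.quasiLast
  rw [← det_rev] at this
  convert this using 2
  ext i j
  simp only [Matrix.submatrix_apply, Fin.rev_castSucc, Fin.rev_rev, ← Fin.succAbove_rev_left]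
  congr 2
  simp

/-- Index sets that are close to each other in the sense of Gantmacher and Krein. -/
structure Quasi {k n : ℕ} (r c : Fin k → Fin n) : Prop where
  sr : StrictMono r
  sc : StrictMono c
  rc : ∀ p q, p < q → r p < c q
  cr : ∀ p q, p < q → c p < r q
  near : ∀ p, (r p).val ≤ (c p).val + 1
  near' : ∀ p, (c p).val ≤ (r p).val + 1

theorem Quasi.swap {k n : ℕ} {r c : Fin k → Fin n} (h : Quasi r c) : Quasi c r :=
  ⟨h.sc, h.sr, h.cr, h.rc, h.near', h.near⟩

theorem Quasi.of_succ {k n : ℕ} {r c : Fin k → Fin (n + 1)} {r' c' : Fin k → Fin n}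
    (h : Quasi r c) (hr : ∀ i, r i = (r' i).succ) (hc : ∀ i, c i = (c' i).succ) :
    Quasi r' c' := by
  refine ⟨fun p q hpq => ?_, fun p q hpq => ?_, fun p q hpq => ?_, fun p q hpq => ?_,
    fun p => ?_, fun p => ?_⟩
  · simpa [hr] using h.sr hpq
  · simpa [hc] using h.sc hpq
  · simpa [hr, hc] using h.rc p q hpq
  · simpa [hr, hc] using h.cr p q hpq
  · simpa [hr, hc] using h.near p
  · simpa [hr, hc] using h.near' p

theorem Quasi.tail {k n : ℕ} {r c : Fin (k + 1) → Fin n} (h : Quasi r c) :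
    Quasi (fun i : Fin k => r i.succ) (fun i => c i.succ) :=
  ⟨fun _ _ hpq => h.sr (by simpa using hpq), fun _ _ hpq => h.sc (by simpa using hpq),
    fun _ _ hpq => h.rc _ _ (by simpa using hpq), fun _ _ hpq => h.cr _ _ (by simpa using hpq),
    fun _ => h.near _, fun _ => h.near' _⟩

theorem exists_pred {k n : ℕ} (r : Fin k → Fin (n + 1)) (h : ∀ i, r i ≠ 0) :
    ∃ r' : Fin k → Fin n, ∀ i, r i = (r' i).succ :=
  ⟨fun i => (r i).pred (h i), fun i => by simp⟩

theorem quasi_pos (n : ℕ) : ∀ (B : Matrix (Fin n) (Fin n) ℝ), Cls B →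
    ∀ (k : ℕ) (r c : Fin k → Fin n), Quasi r c → 0 < (B.submatrix r c).det := by
  induction n using Nat.strong_induction_on with
  | _ n IH =>
  intro B hB k r c hq
  obtain _ | k := k
  · simp
  obtain _ | n := n
  · exact (r 0).elim0
  -- both start at zero
  have both : ∀ (m : ℕ), m < n + 1 → ∀ (B : Matrix (Fin (m + 1)) (Fin (m + 1)) ℝ),
      TotallyNonneg B → B.det ≠ 0 → Sup (B.submatrix Fin.succ Fin.succ) →
      ∀ (r c : Fin (k + 1) → Fin (m + 1)), r 0 = 0 → c 0 = 0 → 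
      (∀ r' c' : Fin k → Fin m, (∀ i, r i.succ = (r' i).succ) → (∀ i, c i.succ = (c' i).succ) →
        Quasi r' c') →
      (∀ i : Fin k, r i.succ ≠ 0) → (∀ i : Fin k, c i.succ ≠ 0) →
      0 < (B.submatrix r c).det := by
    intro m hm B h1 h2 h3 r c hr hc hq hr' hc'
    obtain ⟨r', er⟩ := exists_pred (fun i : Fin k => r i.succ) hr'
    obtain ⟨c', ec⟩ := exists_pred (fun i : Fin k => c i.succ) hc'
    have hp := h1.corner h2
    rw [det_schur_minor B hp.ne' r c r' c' hr hc er ec]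
    exact mul_pos hp (IH m hm _ (Cls.schur' h1 h2 h3) k r' c' (hq r' c' er ec))
  -- rows start at zero, columns at one
  have mixed : ∀ (B : Matrix (Fin (n + 1)) (Fin (n + 1)) ℝ), Cls B →
      ∀ (r c : Fin (k + 1) → Fin (n + 1)), Quasi r c → r 0 = 0 → c 0 ≠ 0 →
      0 < (B.submatrix r c).det := by
    intro B hB r c hq hr hc
    obtain _ | n := n
    · exact absurd (Subsingleton.elim (α := Fin 1) _ _) hc
    have hc1 : (c 0).val = 1 := by
      have h1 := hq.near' 0
      have h2 : (c 0).val ≠ 0 := fun h => hc (Fin.ext h)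
      simp [hr] at h1
      omega
    have hr2 : ∀ i : Fin k, 2 ≤ (r i.succ).val := fun i => by
      have := hq.cr 0 i.succ (Fin.succ_pos i)
      rw [Fin.lt_def] at this; omega
    have hc2 : ∀ i : Fin k, 2 ≤ (c i.succ).val := fun i => by
      have := hq.sc (Fin.succ_pos i)
      rw [Fin.lt_def] at this; omega
    have sA : ∀ x : Fin n, (1 : Fin (n + 2)).succAbove x.succ = x.succ.succ := fun x => by
      have : (1 : Fin (n + 2)) = (0 : Fin (n + 1)).succ := rfl
      rw [this, Fin.succ_succAbove_succ]; simp
    let r'' : Fin (k + 1) → Fin (n + 1) :=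
      Fin.cons 0 (fun i => ⟨(r i.succ).val - 1, by have := hr2 i; omega⟩)
    let c'' : Fin (k + 1) → Fin (n + 1) :=
      Fin.cons 0 (fun i => ⟨(c i.succ).val - 1, by have := hc2 i; omega⟩)
    have er : ∀ i, r i = (1 : Fin (n + 2)).succAbove (r'' i) := by
      intro i
      refine Fin.cases ?_ (fun i => ?_) i
      · simp [r'', hr]
      · have h2 := hr2 i
        have : r'' i.succ = (⟨(r i.succ).val - 2, by omega⟩ : Fin n).succ := by
          apply Fin.ext
          simp [r'']; omega
        rw [this, sA]
        apply Fin.ext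
        simp; omega
    have ec : ∀ i, c i = (c'' i).succ := by
      intro i
      refine Fin.cases ?_ (fun i => ?_) i
      · apply Fin.ext; simp [c'', hc1]
      · have h2 := hc2 i
        apply Fin.ext
        simp [c'']; omega
    have e : B.submatrix r c =
        (B.submatrix (Fin.succAbove 1) Fin.succ).submatrix r'' c'' := by
      ext i j
      simp [er, ec]
    rw [e]
    refine both n (by omega) _
      (hB.tn.sub _ _ (Fin.strictMono_succAbove 1) Fin.strictMono_succ) hB.quasiFirst ?_
      r'' c'' rfl rfl ?_ ?_ ?_
    · intro i j hij
      simp only [Matrix.submatrix_apply, sA]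
      exact hB.sup _ _ (by simp; omega)
    · intro r' c' hr' hc'
      refine (hq.tail.of_succ (r' := fun i => (r' i).succ) (c' := fun i => (c' i).succ)
        ?_ ?_).of_succ (fun _ => rfl) (fun _ => rfl)
      · intro i; rw [er, hr', sA]
      · intro i; rw [ec, hc']
    · intro i h0
      have := hr2 i
      have h1 := congrArg Fin.val h0
      simp [r''] at h1; omega
    · intro i h0
      have := hc2 i
      have h1 := congrArg Fin.val h0
      simp [c''] at h1; omega
  by_cases hr : r 0 = 0 <;> by_cases hc : c 0 = 0
  · refine both n (by omega) B hB.tn hB.det hB.supTail r c hr hc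
      (fun r' c' h1 h2 => hq.tail.of_succ h1 h2) (fun i h => ?_) (fun i h => ?_)
    · have := hq.sr (Fin.succ_pos i); rw [h] at this; exact absurd this (Fin.not_lt_zero _)
    · have := hq.sc (Fin.succ_pos i); rw [h] at this; exact absurd this (Fin.not_lt_zero _)
  · exact mixed B hB r c hq hr hc
  · have := mixed _ hB.transp c r hq.swap hc hr
    rwa [← Matrix.transpose_submatrix, Matrix.det_transpose] at this
  · have hr' : ∀ i, r i ≠ 0 := fun i h =>
      hr (Fin.le_zero_iff.1 (h ▸ hq.sr.monotone (Fin.zero_le i)))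
    have hc' : ∀ i, c i ≠ 0 := fun i h =>
      hc (Fin.le_zero_iff.1 (h ▸ hq.sc.monotone (Fin.zero_le i)))
    obtain ⟨r', er⟩ := exists_pred r hr'
    obtain ⟨c', ec⟩ := exists_pred c hc'
    have := IH n (by omega) _ hB.tail (k + 1) r' c' (hq.of_succ er ec)
    convert this using 2
    ext i j
    simp [er, ec]

/-! Oscillatory matrices belong to the class. -/

theorem Oscillatory.superdiag {n : ℕ} {B : Matrix (Fin n) (Fin n) ℝ} (h : TotallyNonneg B)
    (hd : B.det ≠ 0) (k : ℕ) (hk : TotallyPos (B ^ k)) (i j : Fin n)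
    (hij : i.val + 1 = j.val) : 0 < B i j := by
  by_contra hn
  have h0 : B i j = 0 := le_antisymm (not_lt.1 hn) (h.entry i j)
  have hlt : i < j := by rw [Fin.lt_def]; omega
  have col : ∀ p, p ≤ i → B p j = 0 := by
    intro p hp
    rcases eq_or_lt_of_le hp with rfl | hp
    · exact h0
    have h1 := h.two hp hlt
    rw [h0, mul_zero] at h1
    have h2 := h.entry p j
    have h3 := h.diag hd i
    nlinarith
  have blk : ∀ p q, p ≤ i → j ≤ q → B p q = 0 := by
    intro p q hp hq
    rcases eq_or_lt_of_le hq with rfl | hq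
    · exact col p hp
    have h1 := h.two (lt_of_le_of_lt hp hlt) hq
    rw [col p hp, zero_mul] at h1
    have h2 := h.entry p q
    have h3 := h.diag hd j
    nlinarith
  have pw : ∀ m : ℕ, ∀ p q, p ≤ i → j ≤ q → (B ^ m) p q = 0 := by
    intro m
    induction m with
    | zero =>
      intro p q hp hq
      rw [pow_zero, Matrix.one_apply_ne]
      exact (lt_of_le_of_lt hp (lt_of_lt_of_le hlt hq)).ne
    | succ m ih =>
      intro p q hp hq
      rw [pow_succ, Matrix.mul_apply]
      refine Finset.sum_eq_zero (fun s _ => ?_)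
      rcases le_or_gt s i with hs | hs
      · rw [blk s q hs hq, mul_zero]
      · rw [ih p s hp (by rw [Fin.lt_def] at hs; rw [Fin.le_def]; omega), zero_mul]
  have := hk 1 (fun _ => i) (fun _ => j) (Subsingleton.strictMono _) (Subsingleton.strictMono _)
  simp [pw k i j le_rfl le_rfl] at this

theorem Oscillatory.cls {n : ℕ} {B : Matrix (Fin n) (Fin n) ℝ} (h : Oscillatory B) : Cls B := by
  obtain ⟨htn, k, hk0, hk⟩ := h
  have hd : B.det ≠ 0 := by
    intro h0
    have := hk n id id strictMono_id strictMono_id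
    rw [Matrix.submatrix_id_id, Matrix.det_pow, h0, zero_pow hk0.ne'] at this
    exact lt_irrefl _ this
  refine ⟨htn, hd, fun i j hij => ⟨Oscillatory.superdiag htn hd k hk i j hij, ?_⟩⟩
  refine Oscillatory.superdiag htn.transp (by rwa [Matrix.det_transpose]) k ?_ i j hij
  intro m r c hr hc
  rw [← Matrix.transpose_pow, ← Matrix.transpose_submatrix, Matrix.det_transpose]
  exact hk m c r hc hr

/-! Cauchy-Binet in symmetrised form. -/

theorem cb_expand {n k : ℕ} (A B : Matrix (Fin n) (Fin n) ℝ) (r c : Fin k → Fin n) :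
    ((A * B).submatrix r c).det =
      ∑ f : Fin k → Fin n, (∏ i, A (r i) (f i)) * (B.submatrix f c).det := by
  have h := (Matrix.detRowAlternating (n := Fin k) (R := ℝ)).toMultilinearMap.map_sum
    (fun (i : Fin k) (j : Fin n) => A (r i) j • fun l : Fin k => B j (c l))
  have e : ((A * B).submatrix r c) =
      fun i => ∑ j : Fin n, A (r i) j • fun l : Fin k => B j (c l) := by
    ext i l
    simp [Matrix.mul_apply]
  rw [e]
  refine Eq.trans h (Finset.sum_congr rfl fun f _ => ?_)
  exact MultilinearMap.map_smul_univ _ (fun i => A (r i) (f i)) (fun i l => B (f i) (c l))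

theorem cb_sym {n k : ℕ} (A B : Matrix (Fin n) (Fin n) ℝ) (r c : Fin k → Fin n) :
    (Fintype.card (Equiv.Perm (Fin k)) : ℝ) * ((A * B).submatrix r c).det =
      ∑ f : Fin k → Fin n, (A.submatrix r f).det * (B.submatrix f c).det := by
  have h : ∀ σ : Equiv.Perm (Fin k), ((A * B).submatrix r c).det =
      ∑ f : Fin k → Fin n, ((Equiv.Perm.sign σ : ℤ) : ℝ) * (∏ i, A (r i) (f (σ i))) *
        (B.submatrix f c).det := by
    intro σ
    rw [cb_expand]
    refine (Fintype.sum_equiv (Equiv.arrowCongr σ.symm (Equiv.refl _)) _ _ fun f => ?_).symm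
    have h1 : ∀ i, (Equiv.arrowCongr σ.symm (Equiv.refl (Fin n))) f i = f (σ i) := fun i => rfl
    have h2 : B.submatrix ((Equiv.arrowCongr σ.symm (Equiv.refl (Fin n))) f) c =
        (B.submatrix f c).submatrix σ id := rfl
    rw [h2, Matrix.det_permute]
    simp only [h1]
    ring
  have h2 : (Fintype.card (Equiv.Perm (Fin k)) : ℝ) * ((A * B).submatrix r c).det =
      ∑ σ : Equiv.Perm (Fin k), ((A * B).submatrix r c).det := by
    simp
  rw [h2, Finset.sum_congr rfl (fun σ _ => h σ), Finset.sum_comm]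
  refine Finset.sum_congr rfl fun f _ => ?_
  rw [← Finset.sum_mul, ← Matrix.det_transpose (A.submatrix r f), Matrix.det_apply' (A.submatrix r f).transpose]
  rfl

theorem term_nonneg {n k : ℕ} {A B : Matrix (Fin n) (Fin n) ℝ} (hA : TotallyNonneg A)
    (hB : TotallyNonneg B) {r c : Fin k → Fin n} (hr : StrictMono r) (hc : StrictMono c)
    (f : Fin k → Fin n) : 0 ≤ (A.submatrix r f).det * (B.submatrix f c).det := by
  by_cases hf : Function.Injective f
  · have hs : StrictMono (f ∘ Tuple.sort f) :=
      (Tuple.monotone_sort f).strictMono_of_injective (hf.comp (Tuple.sort f).injective)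
    have h1 := hA k r _ hr hs
    have h2 := hB k _ c hs hc
    have e1 : A.submatrix r (f ∘ Tuple.sort f) = (A.submatrix r f).submatrix id (Tuple.sort f) :=
      rfl
    have e2 : B.submatrix (f ∘ Tuple.sort f) c = (B.submatrix f c).submatrix (Tuple.sort f) id :=
      rfl
    rw [e1, Matrix.det_permute'] at h1
    rw [e2, Matrix.det_permute] at h2
    have h3 := mul_nonneg h1 h2
    rcases Int.units_eq_one_or (Equiv.Perm.sign (Tuple.sort f)) with h | h <;>
      rw [h] at h3 <;> simpa using h3
  · simp only [Function.Injective, not_forall] at hf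
    obtain ⟨i, j, hij, hne⟩ := hf
    rw [Matrix.det_zero_of_row_eq (M := B.submatrix f c) hne (by ext l; simp [hij]), mul_zero]

theorem TotallyNonneg.mul {n : ℕ} {A B : Matrix (Fin n) (Fin n) ℝ} (hA : TotallyNonneg A)
    (hB : TotallyNonneg B) : TotallyNonneg (A * B) := fun k r c hr hc => by
  have h := cb_sym A B r c
  have h2 : 0 ≤ ∑ f : Fin k → Fin n, (A.submatrix r f).det * (B.submatrix f c).det :=
    Finset.sum_nonneg fun f _ => term_nonneg hA hB hr hc f
  rw [← h] at h2
  exact nonneg_of_mul_nonneg_right h2 (by exact_mod_cast Fintype.card_pos)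

theorem mul_minor_pos {n k : ℕ} {A B : Matrix (Fin n) (Fin n) ℝ} (hA : TotallyNonneg A)
    (hB : TotallyNonneg B) {r s c : Fin k → Fin n} (hr : StrictMono r) (hc : StrictMono c)
    (h1 : 0 < (A.submatrix r s).det) (h2 : 0 < (B.submatrix s c).det) :
    0 < ((A * B).submatrix r c).det := by
  have h := cb_sym A B r c
  have h3 : 0 < ∑ f : Fin k → Fin n, (A.submatrix r f).det * (B.submatrix f c).det :=
    Finset.sum_pos' (fun f _ => term_nonneg hA hB hr hc f) ⟨s, Finset.mem_univ _, mul_pos h1 h2⟩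
  rw [← h] at h3
  exact (pos_iff_pos_of_mul_pos h3).1 (by exact_mod_cast Fintype.card_pos)

theorem totallyNonneg_one {n : ℕ} : TotallyNonneg (1 : Matrix (Fin n) (Fin n) ℝ) := by
  intro k r c hr hc
  by_cases hex : ∀ i, ∃ j, r i = c j
  · choose g hg using hex
    have hgm : StrictMono g := fun i j hij => by
      have := hr hij
      rw [hg, hg] at this
      exact hc.lt_iff_lt.1 this
    have hgi : ∀ i, g i = i := fun i => by
      have e := congrArg (fun e : Fin k ≃o Fin k => e i)
        (Subsingleton.elim (hgm.orderIsoOfSurjective g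
          (Finite.surjective_of_injective hgm.injective)) (OrderIso.refl _))
      exact e
    have : r = c := funext fun i => by rw [hg i, hgi]
    subst this
    rw [Matrix.submatrix_one _ hr.injective, Matrix.det_one]
    exact zero_le_one
  · push Not at hex
    obtain ⟨i, hi⟩ := hex
    rw [Matrix.det_eq_zero_of_row_eq_zero i]
    intro j
    simp [hi j]

theorem path_pos {n k : ℕ} (m : ℕ) : ∀ (B : Fin m → Matrix (Fin n) (Fin n) ℝ)
    (_ : ∀ i, TotallyNonneg (B i)) (x : ℕ → Fin k → Fin n) (_ : ∀ t, StrictMono (x t))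
    (_ : ∀ t : Fin m, 0 < ((B t).submatrix (x t) (x (t + 1))).det),
    TotallyNonneg (List.ofFn B).prod ∧ 0 < ((List.ofFn B).prod.submatrix (x 0) (x m)).det := by
  induction m with
  | zero =>
    intro B hB x hx hp
    refine ⟨by simpa using totallyNonneg_one, ?_⟩
    rw [List.ofFn_zero, List.prod_nil, Matrix.submatrix_one _ (hx 0).injective, Matrix.det_one]
    exact zero_lt_one
  | succ m ih =>
    intro B hB x hx hp
    obtain ⟨h1, h2⟩ := ih (fun i => B i.succ) (fun i => hB _) (fun t => x (t + 1))
      (fun t => hx _) (fun t => by simpa using hp t.succ)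
    rw [List.ofFn_succ, List.prod_cons]
    exact ⟨(hB 0).mul h1, mul_minor_pos (hB 0) h1 (hx _) (hx _) (by simpa using hp 0) h2⟩

theorem strictMono_le {k n : ℕ} {r : Fin k → Fin n} (hr : StrictMono r) :
    ∀ (p : ℕ) (hp : p < k), p ≤ (r ⟨p, hp⟩).val := by
  intro p
  induction p with
  | zero => intro hp; exact Nat.zero_le _
  | succ p ih =>
    intro hp
    have h1 := ih (by omega)
    have h2 : r ⟨p, by omega⟩ < r ⟨p + 1, hp⟩ := hr (by rw [Fin.lt_def]; simp)
    rw [Fin.lt_def] at h2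
    omega

theorem strictMono_ge {k n : ℕ} {r : Fin k → Fin n} (hr : StrictMono r) (p : Fin k) :
    (r p).val + k ≤ n + p.val := by
  have h : StrictMono (Fin.rev ∘ r ∘ Fin.rev) := fun i j hij => by
    simpa using hr (by simpa using hij)
  have h1 := strictMono_le h p.rev.val p.rev.isLt
  simp only [Fin.eta, Function.comp_apply, Fin.rev_rev] at h1
  simp only [Fin.val_rev] at h1
  have := p.isLt
  have := (r p).isLt
  omega

theorem stmt15 {n : ℕ} (hn : 2 ≤ n) (B : Fin (n - 1) → Matrix (Fin n) (Fin n) ℝ)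
    (hB : ∀ i, Oscillatory (B i)) :
    TotallyPos (List.ofFn B).prod := by
  intro k r c hr hc
  let x : ℕ → Fin k → Fin n := fun t p =>
    ⟨max ((r p).val - (t - p.val)) (min (c p).val ((r p).val + (t + 1 + p.val - k))), by
      have := (r p).isLt
      have := (c p).isLt
      omega⟩
  have hx : ∀ t, StrictMono (x t) := by
    intro t p q hpq
    have h1 := hr hpq
    have h2 := hc hpq
    rw [Fin.lt_def] at *
    simp only [x]
    omega
  have h0 : x 0 = r := by
    funext p
    apply Fin.ext
    simp only [x]
    have := p.isLt
    omega
  have hend : x (n - 1) = c := by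
    funext p
    apply Fin.ext
    simp only [x]
    have := p.isLt
    have h1 := strictMono_ge hr p
    have h2 := strictMono_ge hc p
    have h3 := strictMono_le hr p.val p.isLt
    have h4 := strictMono_le hc p.val p.isLt
    simp only [Fin.eta] at h3 h4
    omega
  have hq : ∀ t, Quasi (x t) (x (t + 1)) := by
    intro t
    refine ⟨hx _, hx _, fun p q hpq => ?_, fun p q hpq => ?_, fun p => ?_, fun p => ?_⟩
    · have h1 := hr hpq
      have h2 := hc hpq
      rw [Fin.lt_def] at *
      simp only [x]
      omega
    · have h1 := hr hpq
      have h2 := hc hpq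
      rw [Fin.lt_def] at *
      simp only [x]
      omega
    · simp only [x]
      omega
    · simp only [x]
      omega
  have := (path_pos (n - 1) B (fun i => (hB i).1) x hx
    (fun t => quasi_pos n _ (hB t).cls k _ _ (hq t))).2
  rwa [h0, hend] at this
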